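/- The 3-dissection (q^2;q^2)_∞^2/((q;q^2)_∞^2 (q^6;q^6)_∞) = M0(q^3) + q M1(q^3) + q^2 M2(q^3) holds, where M0(q) = (-q;q)_∞ (q^3;q^3)_∞^2 / ((q;q)_∞ (-q^3;q^3)_∞^2), M1(q) = 2 (q^3;q^3)_∞ (q^6;q^6)_∞ / (q;q)_∞, and M2(q) = (q^6;q^6)_∞^4 / ((q^2;q^2)_∞ (q^3;q^3)_∞^2). -/

import Mathlib

/-- The infinite q-Pochhammer symbol `(a; q)_∞ = ∏_{j ≥ 0} (1 - a q^j)`. -/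
noncomputable def qPochInf (a q : ℂ) : ℂ := ∏' j : ℕ, (1 - a * q ^ j)

/-- The finite q-Pochhammer symbol `(a; q)_n = ∏_{j = 0}^{n-1} (1 - a q^j)`. -/
noncomputable def qPoch (a q : ℂ) (n : ℕ) : ℂ := ∏ j ∈ Finset.range n, (1 - a * q ^ j)

noncomputable def M2bar0 (q : ℂ) : ℂ :=
  qPochInf (-q) q * qPochInf (q ^ 3) (q ^ 3) ^ 2 /
    (qPochInf q q * qPochInf (-q ^ 3) (q ^ 3) ^ 2)

noncomputable def M2bar1 (q : ℂ) : ℂ :=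
  2 * (qPochInf (q ^ 3) (q ^ 3) * qPochInf (q ^ 6) (q ^ 6)) / qPochInf q q

noncomputable def M2bar2 (q : ℂ) : ℂ :=
  qPochInf (q ^ 6) (q ^ 6) ^ 4 /
    (qPochInf (q ^ 2) (q ^ 2) * qPochInf (q ^ 3) (q ^ 3) ^ 2)

open Filter Topology

theorem qP_summable (a q : ℂ) (hq : ‖q‖ < 1) : Summable (fun j : ℕ => ‖-(a * q ^ j)‖) := by
  simp only [norm_neg, norm_mul, norm_pow]
  exact (summable_geometric_of_lt_one (norm_nonneg _) hq).mul_left _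

theorem qP_multipliable (a q : ℂ) (hq : ‖q‖ < 1) :
    Multipliable (fun j : ℕ => (1 - a * q ^ j)) := by
  simpa only [sub_eq_add_neg] using multipliable_one_add_of_summable (qP_summable a q hq)

theorem qP_tendsto (a q : ℂ) (hq : ‖q‖ < 1) :
    Tendsto (qPoch a q) atTop (𝓝 (qPochInf a q)) :=
  (qP_multipliable a q hq).hasProd.tendsto_prod_nat

theorem one_sub_pow_ne (q : ℂ) (hq : ‖q‖ < 1) (j : ℕ) : 1 - q * q ^ j ≠ 0 := by
  intro h
  have h1 : q ^ (j + 1) = 1 := by rw [pow_succ']; linear_combination -h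
  have h2 : ‖q‖ ^ (j + 1) = 1 := by rw [← norm_pow, h1, norm_one]
  have h3 := pow_lt_one₀ (norm_nonneg q) hq (Nat.succ_ne_zero j)
  exact absurd h2 h3.ne

theorem E_ne (q : ℂ) (hq : ‖q‖ < 1) : qPochInf q q ≠ 0 := by
  unfold qPochInf
  simp only [sub_eq_add_neg]
  refine tprod_one_add_ne_zero_of_summable ?_ (qP_summable q q hq)
  intro j
  have := one_sub_pow_ne q hq j
  rwa [sub_eq_add_neg] at this

theorem e_ne (q : ℂ) (hq : ‖q‖ < 1) (n : ℕ) : qPoch q q n ≠ 0 :=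
  Finset.prod_ne_zero_iff.2 fun j _ => one_sub_pow_ne q hq j

theorem e_succ (a q : ℂ) (n : ℕ) : qPoch a q (n + 1) = qPoch a q n * (1 - a * q ^ n) :=
  Finset.prod_range_succ _ _

/-- reciprocal of `(q;q)_k`, extended by zero to negative `k` -/
noncomputable def rr (q : ℂ) (k : ℤ) : ℂ := if k < 0 then 0 else (qPoch q q k.toNat)⁻¹

theorem rr_pred (q : ℂ) (hq : ‖q‖ < 1) (k : ℤ) : rr q (k - 1) = (1 - q ^ k) * rr q k := by
  rcases lt_trichotomy k 0 with h | h | h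
  · simp [rr, h, show k - 1 < 0 by lia]
  · subst h; simp [rr]
  · obtain ⟨n, rfl⟩ : ∃ n : ℕ, k = n + 1 := ⟨(k - 1).toNat, by lia⟩
    have h1 : ¬ ((n : ℤ) + 1 < 0) := by lia
    have h2 : ¬ ((n : ℤ) + 1 - 1 < 0) := by lia
    have h3 : ((n : ℤ) + 1).toNat = n + 1 := by lia
    have h4 : ((n : ℤ) + 1 - 1).toNat = n := by lia
    have h5 : q ^ ((n : ℤ) + 1) = q * q ^ n := by
      rw [← pow_succ']; exact_mod_cast rfl
    simp only [rr, h1, h2, if_false, h3, h4, h5, e_succ]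
    have := one_sub_pow_ne q hq n
    have := e_ne q hq n
    field_simp

def TT (j : ℤ) : ℤ := j * (j + 1) / 2

theorem two_TT (j : ℤ) : 2 * TT j = j * (j + 1) :=
  Int.mul_ediv_cancel' (Int.even_mul_succ_self j).two_dvd

theorem TT_succ (j : ℤ) : TT (j + 1) = TT j + j + 1 := by
  have h1 := two_TT j
  have h2 := two_TT (j + 1)
  linarith

theorem finite_jtp (q z : ℂ) (hq : ‖q‖ < 1) (hq0 : q ≠ 0) (hz : z ≠ 0) (n : ℕ) :
    HasSum (fun j : ℤ => qPoch q q (2 * n) * rr q (n - j) * rr q (n + j) * (q ^ TT j * z ^ j))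
      (qPoch (-(z * q)) q n * qPoch (-z⁻¹) q n) := by
  induction n with
  | zero =>
    have : (qPoch (-(z * q)) q 0 * qPoch (-z⁻¹) q 0) =
      (fun j : ℤ => qPoch q q (2 * 0) * rr q ((0 : ℕ) - j) * rr q ((0 : ℕ) + j) *
        (q ^ TT j * z ^ j)) 0 := by
      simp [qPoch, rr, TT]
    rw [this]
    apply hasSum_single
    intro j hj
    rcases lt_or_gt_of_ne hj with h | h
    · simp [rr, h]
    · simp [rr, h]
  | succ n ih =>
    have hs1 := ((Equiv.subRight (1 : ℤ)).hasSum_iff.2 ih).mul_left (z * q * q ^ n)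
    have hs2 := ((Equiv.addRight (1 : ℤ)).hasSum_iff.2 ih).mul_left (z⁻¹ * q ^ n)
    have hs0 := ih.mul_left (1 + q * q ^ (2 * n))
    have hs := (hs0.add hs1).add hs2
    convert hs using 1
    · rfl
    · funext j
      have hT1 : q ^ TT (j - 1) * q ^ j = q ^ TT j := by
        rw [← zpow_add₀ hq0]
        have := TT_succ (j - 1)
        congr 1
        simp at this
        linarith
      have hT2 : q ^ TT (j + 1) = q ^ TT j * q ^ j * q := by
        rw [TT_succ, zpow_add₀ hq0, zpow_add₀ hq0, zpow_one]
      have hz1 : z ^ (j - 1) * z = z ^ j := by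
        rw [← zpow_add_one₀ hz]; congr 1; ring
      have hz2 : z ^ (j + 1) = z ^ j * z := zpow_add_one₀ hz j
      have a1 := rr_pred q hq (n + 1 - j)
      have a2 := rr_pred q hq (n + 1 - j - 1)
      have b1 := rr_pred q hq (n + 1 + j)
      have b2 := rr_pred q hq (n + 1 + j - 1)
      have hj : q ^ j ≠ 0 := zpow_ne_zero _ hq0
      have hA : q ^ ((n : ℤ) + 1 - j) = q ^ n * q / q ^ j := by
        rw [zpow_sub₀ hq0, zpow_add₀ hq0, zpow_one, zpow_natCast]
      have hA' : q ^ ((n : ℤ) + 1 - j - 1) = q ^ n / q ^ j := by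
        rw [zpow_sub₀ hq0, hA, zpow_one]; field_simp
      have hB : q ^ ((n : ℤ) + 1 + j) = q ^ n * q * q ^ j := by
        rw [zpow_add₀ hq0, zpow_add₀ hq0, zpow_one, zpow_natCast]
      have hB' : q ^ ((n : ℤ) + 1 + j - 1) = q ^ n * q ^ j := by
        rw [zpow_sub₀ hq0, hB, zpow_one]; field_simp
      have e1 : ((n + 1 : ℕ) : ℤ) = n + 1 := by push_cast; rfl
      have e2 : qPoch q q (2 * (n + 1)) =
          qPoch q q (2 * n) * (1 - q * q ^ (2 * n)) * (1 - q * q ^ (2 * n + 1)) := by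
        rw [← e_succ, ← e_succ]
        congr 1
      simp only [Function.comp, Equiv.subRight_apply, Equiv.coe_addRight, e1, e2]
      rw [show (n : ℤ) - j = n + 1 - j - 1 by ring, show (n : ℤ) + j = n + 1 + j - 1 by ring,
        show (n : ℤ) - (j - 1) = n + 1 - j by ring, 
        show (n : ℤ) + (j - 1) = n + 1 + j - 1 - 1 by ring,
        show (n : ℤ) - (j + 1) = n + 1 - j - 1 - 1 by ring,
        show (n : ℤ) + (j + 1) = n + 1 + j by ring, a2, b2, a1, b1, hA, hA', hB, hB', hT2, hz2,
        ← hT1, ← hz1]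
      field_simp
      ring
    · rw [e_succ, e_succ]
      field_simp
      ring

theorem rr_bound (q : ℂ) (hq : ‖q‖ < 1) : ∃ C : ℝ, 0 ≤ C ∧ ∀ k, ‖rr q k‖ ≤ C := by
  have h := ((qP_tendsto q q hq).inv₀ (E_ne q hq)).norm.bddAbove_range
  obtain ⟨C, hC⟩ := h
  refine ⟨max C 0, le_max_right _ _, fun k => ?_⟩
  unfold rr
  split_ifs
  · simp
  · exact le_max_of_le_left (hC ⟨k.toNat, rfl⟩)

theorem rr_tendsto (q : ℂ) (hq : ‖q‖ < 1) :
    Tendsto (rr q) atTop (𝓝 (qPochInf q q)⁻¹) := by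
  have h := (qP_tendsto q q hq).inv₀ (E_ne q hq)
  have h2 : Tendsto (fun k : ℤ => k.toNat) atTop atTop := by
    refine tendsto_atTop.2 fun b => ?_
    filter_upwards [eventually_ge_atTop (b : ℤ)] with k hk
    lia
  refine (h.comp h2).congr' ?_
  filter_upwards [eventually_ge_atTop (0 : ℤ)] with k hk
  simp [rr, not_lt.2 hk]

theorem jtp (q z : ℂ) (hq : ‖q‖ < 1) (hq0 : q ≠ 0) (hz : z ≠ 0)
    (hs : Summable (fun j : ℤ => ‖q ^ TT j * z ^ j‖)) :
    ∑' j : ℤ, q ^ TT j * z ^ j =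
      qPochInf q q * (qPochInf (-(z * q)) q * qPochInf (-z⁻¹) q) := by
  obtain ⟨C, hC0, hC⟩ := rr_bound q hq
  obtain ⟨D, hD⟩ := (qP_tendsto q q hq).norm.bddAbove_range
  have hD' : ∀ n, ‖qPoch q q n‖ ≤ D := fun n => hD ⟨n, rfl⟩
  have hD0 : 0 ≤ D := (norm_nonneg _).trans (hD' 0)
  have hE := E_ne q hq
  have t2 : Tendsto (fun n : ℕ => 2 * n) atTop atTop :=
    tendsto_id.const_mul_atTop' (by norm_num)
  have key : Tendsto (fun n : ℕ => ∑' j : ℤ,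
      qPoch q q (2 * n) * rr q (n - j) * rr q (n + j) * (q ^ TT j * z ^ j)) atTop
      (𝓝 (∑' j : ℤ, qPochInf q q * (qPochInf q q)⁻¹ * (qPochInf q q)⁻¹ * (q ^ TT j * z ^ j))) := by
    refine tendsto_tsum_of_dominated_convergence (hs.mul_left (D * C * C)) ?_ ?_
    · intro j
      have c1 : Tendsto (fun n : ℕ => (n : ℤ) - j) atTop atTop :=
        tendsto_atTop_add_const_right _ (-j) tendsto_natCast_atTop_atTop
      have c2 : Tendsto (fun n : ℕ => (n : ℤ) + j) atTop atTop :=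
        tendsto_atTop_add_const_right _ j tendsto_natCast_atTop_atTop
      exact ((((qP_tendsto q q hq).comp t2).mul ((rr_tendsto q hq).comp c1)).mul
        ((rr_tendsto q hq).comp c2)).mul_const _
    · refine Eventually.of_forall fun n j => ?_
      rw [norm_mul, norm_mul, norm_mul]
      gcongr
      · exact hD' _
      · exact hC _
      · exact hC _
  have key2 := key.congr fun n => (finite_jtp q z hq hq0 hz n).tsum_eq
  have key3 := tendsto_nhds_unique key2
    ((qP_tendsto (-(z * q)) q hq).mul (qP_tendsto (-z⁻¹) q hq))
  rw [tsum_mul_left, mul_inv_cancel₀ hE, one_mul] at key3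
  rw [← key3, mul_inv_cancel_left₀ hE]

theorem summable_exp (q : ℂ) (hq : ‖q‖ < 1) (hq0 : q ≠ 0) (e : ℤ → ℤ)
    (he : ∀ j, |j| - 1 ≤ e j) : Summable (fun j : ℤ => ‖q ^ e j‖) := by
  have hp : 0 < ‖q‖ := norm_pos_iff.2 hq0
  have h0 : Summable (fun n : ℕ => ‖q‖ ^ ((n : ℤ) - 1)) := by
    have := (summable_geometric_of_lt_one (norm_nonneg q) hq).mul_right (‖q‖⁻¹)
    refine this.congr fun n => ?_
    rw [zpow_sub₀ hp.ne', zpow_natCast, zpow_one, div_eq_mul_inv]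
  have h1 : Summable (fun j : ℤ => ‖q‖ ^ (|j| - 1)) := by
    apply Summable.of_nat_of_neg <;> simpa using h0
  refine Summable.of_nonneg_of_le (fun _ => norm_nonneg _) (fun j => ?_) h1
  rw [norm_zpow]
  exact zpow_le_zpow_right_of_le_one₀ hp hq.le (he j)

theorem TT_bound (j : ℤ) : |j| - 1 ≤ TT j := by
  have := two_TT j
  rcases abs_cases j with ⟨h, h'⟩ | ⟨h, h'⟩ <;> rw [h] <;> nlinarith [sq_nonneg (j + 1), sq_nonneg (j+2)]

theorem TT3_bound (j : ℤ) : |j| - 1 ≤ 3 * TT j - j := by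
  have := two_TT j
  rcases abs_cases j with ⟨h, h'⟩ | ⟨h, h'⟩ <;> rw [h] <;> nlinarith [sq_nonneg (j + 1), sq_nonneg (j)]

theorem npow_lt (q : ℂ) (hq : ‖q‖ < 1) (k : ℕ) (hk : k ≠ 0) : ‖q ^ k‖ < 1 := by
  rw [norm_pow]; exact pow_lt_one₀ (norm_nonneg _) hq hk

theorem prod_neg (q : ℂ) (hq : ‖q‖ < 1) :
    qPochInf (-q) q * qPochInf q q = qPochInf (q ^ 2) (q ^ 2) := by
  unfold qPochInf
  rw [← (qP_multipliable (-q) q hq).tprod_mul (qP_multipliable q q hq)]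
  congr 1; funext j; ring

theorem prod_odd (q : ℂ) (hq : ‖q‖ < 1) :
    qPochInf q (q ^ 2) * qPochInf (q ^ 2) (q ^ 2) = qPochInf q q := by
  have h2 := npow_lt q hq 2 (by norm_num)
  have t : Tendsto (fun n : ℕ => 2 * n) atTop atTop :=
    tendsto_id.const_mul_atTop' (by norm_num)
  refine tendsto_nhds_unique ((qP_tendsto q (q ^ 2) h2).mul (qP_tendsto (q ^ 2) (q ^ 2) h2))
    (((qP_tendsto q q hq).comp t).congr fun n => ?_)
  induction n with
  | zero => simp [qPoch]
  | succ n ih =>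
    simp only [Function.comp] at ih ⊢
    rw [show 2 * (n + 1) = 2 * n + 1 + 1 by ring]
    simp only [e_succ, ih]
    ring

theorem prod_three (a q : ℂ) (hq : ‖q‖ < 1) :
    qPochInf a (q ^ 3) * qPochInf (a * q) (q ^ 3) * qPochInf (a * q ^ 2) (q ^ 3)
      = qPochInf a q := by
  have h2 := npow_lt q hq 3 (by norm_num)
  have t : Tendsto (fun n : ℕ => 3 * n) atTop atTop :=
    tendsto_id.const_mul_atTop' (by norm_num)
  refine tendsto_nhds_unique (((qP_tendsto a (q ^ 3) h2).mul (qP_tendsto (a * q) (q ^ 3) h2)).mul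
    (qP_tendsto (a * q ^ 2) (q ^ 3) h2)) (((qP_tendsto a q hq).comp t).congr fun n => ?_)
  induction n with
  | zero => simp [qPoch]
  | succ n ih =>
    simp only [Function.comp] at ih ⊢
    rw [show 3 * (n + 1) = 3 * n + 1 + 1 + 1 by ring]
    simp only [e_succ, ih]
    ring

theorem prod_neg_one (q : ℂ) (hq : ‖q‖ < 1) :
    qPochInf (-1) q = 2 * qPochInf (-q) q := by
  refine tendsto_nhds_unique ((qP_tendsto (-1) q hq).comp (tendsto_add_atTop_nat 1))
    (((qP_tendsto (-q) q hq).const_mul 2).congr fun n => ?_)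
  simp only [Function.comp, qPoch, Finset.prod_range_succ']
  rw [mul_comm]
  congr 1
  · exact Finset.prod_congr rfl fun j _ => by ring
  · norm_num

theorem theta_eq (q : ℂ) (hq : ‖q‖ < 1) (hq0 : q ≠ 0) :
    ∑' j : ℤ, q ^ TT j = 2 * (qPochInf (q ^ 2) (q ^ 2) ^ 2 / qPochInf q q) := by
  have h := jtp q 1 hq hq0 one_ne_zero (by simpa using summable_exp q hq hq0 TT TT_bound)
  simp only [one_zpow, mul_one, one_mul, inv_one] at h
  rw [h, prod_neg_one q hq, ← prod_neg q hq]
  have := E_ne q hq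
  field_simp

theorem G_eq (q : ℂ) (hq : ‖q‖ < 1) (hq0 : q ≠ 0) :
    ∑' j : ℤ, q ^ (3 * TT j - j) = qPochInf (q ^ 2) (q ^ 2) * qPochInf (q ^ 3) (q ^ 3) ^ 2 /
      (qPochInf q q * qPochInf (q ^ 6) (q ^ 6)) := by
  have h3 := npow_lt q hq 3 (by norm_num)
  have hx : ∀ j : ℤ, (q ^ 3) ^ TT j * q⁻¹ ^ j = q ^ (3 * TT j - j) := by
    intro j
    rw [zpow_sub₀ hq0, zpow_mul, inv_zpow, div_eq_mul_inv]
    norm_cast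
  have h := jtp (q ^ 3) q⁻¹ h3 (pow_ne_zero _ hq0) (inv_ne_zero hq0) (by
    simp only [hx]
    exact summable_exp q hq hq0 _ TT3_bound)
  simp only [hx, inv_inv] at h
  have e : q⁻¹ * q ^ 3 = q ^ 2 := by field_simp
  rw [e] at h
  have p3 := prod_three (-q) q hq
  rw [show -q * q = - q ^ 2 by ring, show -q * q ^ 2 = -q ^ 3 by ring] at p3
  have n1 := prod_neg q hq
  have n3 := prod_neg (q ^ 3) h3
  rw [← pow_mul] at n3
  norm_num at n3
  have z1 := E_ne q hq
  have z3 := E_ne _ h3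
  have z6 := E_ne _ (npow_lt q hq 6 (by norm_num))
  rw [h, eq_div_iff (mul_ne_zero z1 z6), ← n3, ← n1, ← p3]
  ring

theorem tsum_three (f : ℤ → ℂ) (hf : Summable f) :
    ∑' j, f j = ∑' k : ℤ, f (k * 3) + ∑' k : ℤ, f (k * 3 + 1) + ∑' k : ℤ, f (k * 3 + 2) := by
  have s : ∀ i : ℤ, Summable (fun k : ℤ => f (k * 3 + i)) := fun i =>
    hf.comp_injective (i := fun k : ℤ => k * 3 + i) (fun a b h => by simp at h; exact h)
  have s0 : Summable (fun k : ℤ => f (k * 3)) := by simpa using s 0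
  rw [← (Int.divModEquiv 3).symm.tsum_eq,
    Summable.tsum_prod (f := fun c => f ((Int.divModEquiv 3).symm c))
      ((Int.divModEquiv 3).symm.summable_iff.2 hf)]
  simp only [tsum_fintype, Fin.sum_univ_three]
  rw [← s0.tsum_add (s 1), ← (s0.add (s 1)).tsum_add (s 2)]
  congr 1; funext k
  simp [Int.divModEquiv]

theorem theta_dissect (q : ℂ) (hq : ‖q‖ < 1) (hq0 : q ≠ 0) :
    ∑' j : ℤ, q ^ TT j =
      2 * ∑' j : ℤ, (q ^ 3) ^ (3 * TT j - j) + q * ∑' j : ℤ, (q ^ 9) ^ TT j := by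
  rw [tsum_three _ (summable_exp q hq hq0 TT TT_bound).of_norm]
  have e0 : ∀ k : ℤ, q ^ TT (k * 3) = (q ^ 3) ^ (3 * TT k - k) := by
    intro k
    have h : TT (k * 3) = (3 : ℕ) * (3 * TT k - k) := by
      have := two_TT k
      have := two_TT (k * 3)
      push_cast
      linarith
    rw [h, zpow_mul, zpow_natCast]
  have e1 : ∀ k : ℤ, q ^ TT (k * 3 + 1) = q * (q ^ 9) ^ (TT k) := by
    intro k
    have h : TT (k * 3 + 1) = 1 + (9 : ℕ) * TT k := by
      have := two_TT k
      have := two_TT (k * 3 + 1)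
      push_cast
      linarith
    rw [h, zpow_add₀ hq0, zpow_mul, zpow_natCast, zpow_one]
  have e2 : ∑' k : ℤ, q ^ TT (k * 3 + 2) = ∑' k : ℤ, (q ^ 3) ^ (3 * TT k - k) := by
    rw [← (Equiv.subLeft (-1 : ℤ)).tsum_eq (fun k : ℤ => (q ^ 3) ^ (3 * TT k - k))]
    congr 1; funext k
    have h : TT (k * 3 + 2) = (3 : ℕ) * (3 * TT (-1 - k) - (-1 - k)) := by
      have := two_TT (-1 - k)
      have := two_TT (k * 3 + 2)
      push_cast
      linarith
    rw [h, zpow_mul, zpow_natCast]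
    simp
  simp only [e0, e1, e2, tsum_mul_left]
  ring

theorem psi_dissect (q : ℂ) (hq : ‖q‖ < 1) (hq0 : q ≠ 0) :
    qPochInf (q ^ 2) (q ^ 2) ^ 2 / qPochInf q q =
      qPochInf (q ^ 6) (q ^ 6) * qPochInf (q ^ 9) (q ^ 9) ^ 2 /
        (qPochInf (q ^ 3) (q ^ 3) * qPochInf (q ^ 18) (q ^ 18)) +
      q * (qPochInf (q ^ 18) (q ^ 18) ^ 2 / qPochInf (q ^ 9) (q ^ 9)) := by
  have h := theta_dissect q hq hq0
  rw [theta_eq q hq hq0, G_eq _ (npow_lt q hq 3 (by norm_num)) (pow_ne_zero _ hq0),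
    theta_eq _ (npow_lt q hq 9 (by norm_num)) (pow_ne_zero _ hq0)] at h
  simp only [← pow_mul] at h
  norm_num at h
  linear_combination h / 2

/-- 3-dissection of the residual M2-crank generating function at a cube root of unity. -/
theorem M2crank_dissection (q : ℂ) (hq : ‖q‖ < 1) :
    qPochInf (q ^ 2) (q ^ 2) ^ 2 /
        (qPochInf q (q ^ 2) ^ 2 * qPochInf (q ^ 6) (q ^ 6)) =
      M2bar0 (q ^ 3) + q * M2bar1 (q ^ 3) + q ^ 2 * M2bar2 (q ^ 3) := by
  rcases eq_or_ne q 0 with rfl | hq0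
  · simp [M2bar0, qPochInf]
  have h := psi_dissect q hq hq0
  have n1 := prod_odd q hq
  have n3 := prod_neg (q ^ 3) (npow_lt q hq 3 (by norm_num))
  have n9 := prod_neg (q ^ 9) (npow_lt q hq 9 (by norm_num))
  have z1 := E_ne q hq
  have z2 := E_ne _ (npow_lt q hq 2 (by norm_num))
  have z3 := E_ne _ (npow_lt q hq 3 (by norm_num))
  have z6 := E_ne _ (npow_lt q hq 6 (by norm_num))
  have z9 := E_ne _ (npow_lt q hq 9 (by norm_num))
  have z18 := E_ne _ (npow_lt q hq 18 (by norm_num))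
  unfold M2bar0 M2bar1 M2bar2
  simp only [← pow_mul] at n3 n9 ⊢
  norm_num at n3 n9 ⊢
  have m1 : qPochInf q (q ^ 2) = qPochInf q q / qPochInf (q ^ 2) (q ^ 2) := by
    rw [eq_div_iff z2, n1]
  have m3 := eq_div_of_mul_eq z3 n3
  have m9 := eq_div_of_mul_eq z9 n9
  rw [m1, m3, m9]
  have hl : qPochInf (q ^ 2) (q ^ 2) ^ 2 /
      ((qPochInf q q / qPochInf (q ^ 2) (q ^ 2)) ^ 2 * qPochInf (q ^ 6) (q ^ 6)) =
      (qPochInf (q ^ 2) (q ^ 2) ^ 2 / qPochInf q q) ^ 2 / qPochInf (q ^ 6) (q ^ 6) := by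
    field_simp
  rw [hl, h]
  field_simp
  ring
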